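/- arXiv:1811.06955 — 4 statements merged into one kernel-verified Lean document; each statement's English description precedes it below -/
import Mathlib

section
/- Let R be a commutative ring, M an R-module, and φ : M → R an R-linear map. Define the binary operation x ▷ y = (φ(y) + 1)·x − φ(x)·y on M. Then this operation is right self-distributive: for all x, y, z ∈ M, (x ▷ y) ▷ z = (x ▷ z) ▷ (y ▷ z). -/
/-- The operation `x ▷ y = (φ(y) + 1) • x - φ(x) • y` on an `R`-module `M`. -/
def tri {R M : Type*} [CommRing R] [AddCommGroup M] [Module R M]
    (φ : M →ₗ[R] R) (x y : M) : M :=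
  (φ y + 1) • x - φ x • y

theorem map_tri {R M : Type*} [CommRing R] [AddCommGroup M] [Module R M]
    (φ : M →ₗ[R] R) (x y : M) : φ (tri φ x y) = φ x := by
  simp only [tri, map_sub, map_smul, smul_eq_mul]
  ring

/-- (Q3) The operation `x ▷ y = (φ(y) + 1) • x - φ(x) • y` is right self-distributive. -/
theorem tri_right_distrib {R M : Type*} [CommRing R] [AddCommGroup M] [Module R M]
    (φ : M →ₗ[R] R) : ∀ x y z : M, tri φ (tri φ x y) z = tri φ (tri φ x z) (tri φ y z) := by
  intro x y z
  rw [tri, map_tri, tri.eq_def φ (tri φ x z), map_tri, map_tri]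
  unfold tri
  module
end

section
/- Let R be a commutative ring, M an R-module, and φ : M → R an R-linear map. Let U(φ) = {x ∈ M : φ(x) + 1 is a unit of R}. Define x ▷ y = (φ(y) + 1)·x − φ(x)·y, and for y ∈ U(φ) define x ▷⁻¹ y = (φ(y) + 1)⁻¹·(x + φ(x)·y). Then U(φ) is closed under both operations: if x, y ∈ U(φ) then x ▷ y ∈ U(φ) and x ▷⁻¹ y ∈ U(φ). -/
/-- The operation `x ▷⁻¹ y = (φ(y) + 1)⁻¹ • (x + φ(x) • y)` on an `R`-module `M`,
where `(φ(y) + 1)⁻¹` is `Ring.inverse (φ y + 1)` (the inverse when `φ(y) + 1` is a unit). -/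
noncomputable def triInv {R M : Type*} [CommRing R] [AddCommGroup M] [Module R M]
    (φ : M →ₗ[R] R) (x y : M) : M :=
  Ring.inverse (φ y + 1) • (x + φ x • y)

theorem map_triInv {R M : Type*} [CommRing R] [AddCommGroup M] [Module R M]
    (φ : M →ₗ[R] R) (x : M) {y : M} (hy : IsUnit (φ y + 1)) : φ (triInv φ x y) = φ x := by
  simp only [triInv, map_add, map_smul, smul_eq_mul]
  linear_combination φ x * Ring.inverse_mul_cancel _ hy

/-- `U(φ) = {x ∈ M | φ(x) + 1 is a unit of R}` is closed under `▷` and `▷⁻¹`. -/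
theorem U_closed {R M : Type*} [CommRing R] [AddCommGroup M] [Module R M]
    (φ : M →ₗ[R] R) (U : Set M) (hU : U = {x : M | IsUnit (φ x + 1)}) :
    ∀ x ∈ U, ∀ y ∈ U, tri φ x y ∈ U ∧ triInv φ x y ∈ U := by
  subst hU
  intro x hx y hy
  simp only [Set.mem_ofPred_eq] at hx hy ⊢
  rw [map_tri, map_triInv φ x hy]
  exact ⟨hx, hx⟩
end

section
/- Let R be a commutative ring, M an R-module, and φ : M → R an R-linear map. Let U(φ) = {x ∈ M : φ(x) + 1 is a unit of R}, with operations x ▷ y = (φ(y) + 1)·x − φ(x)·y and x ▷⁻¹ y = (φ(y) + 1)⁻¹·(x + φ(x)·y). Then (U(φ), ▷, ▷⁻¹) is a quandle: U(φ) is closed under both operations, and for all x, y, z ∈ U(φ) one has (Q1) x ▷ x = x, (Q2) (x ▷ y) ▷⁻¹ y = x = (x ▷⁻¹ y) ▷ y, and (Q3) (x ▷ y) ▷ z = (x ▷ z) ▷ (y ▷ z). -/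
/-- `U(φ) = {x ∈ M | φ(x) + 1 is a unit of R}` with the operations `▷`, `▷⁻¹` is a quandle:
it is closed under both operations and the quandle axioms (Q1), (Q2), (Q3) hold on it. -/
theorem U_quandle {R M : Type*} [CommRing R] [AddCommGroup M] [Module R M]
    (φ : M →ₗ[R] R) (U : Set M) (hU : U = {x : M | IsUnit (φ x + 1)}) :
    ∀ x ∈ U, ∀ y ∈ U,
      tri φ x y ∈ U ∧
      triInv φ x y ∈ U ∧
      tri φ x x = x ∧
      triInv φ (tri φ x y) y = x ∧
      tri φ (triInv φ x y) y = x ∧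
      ∀ z ∈ U, tri φ (tri φ x y) z = tri φ (tri φ x z) (tri φ y z) := by
  subst hU
  intro x hx y hy
  simp only [Set.mem_ofPred_eq] at hx hy
  refine ⟨?_, ?_, ?_, ?_, ?_, fun z _ => ?_⟩
  · simpa only [Set.mem_ofPred_eq, map_tri] using hx
  · simpa only [Set.mem_ofPred_eq, map_triInv φ x hy] using hx
  · simp only [tri]
    module
  · rw [triInv, map_tri, tri, sub_add_cancel, smul_smul, Ring.inverse_mul_cancel _ hy, one_smul]
  · rw [tri, map_triInv φ x hy, triInv, smul_smul, Ring.mul_inverse_cancel _ hy, one_smul,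
      add_sub_cancel_right]
  · rw [tri, map_tri, tri.eq_def φ (tri φ x z), map_tri, map_tri]
    simp only [tri]
    module
end

section
/- Let Λ₃ = ℤ[t₁^{±1}, t₂^{±1}, t₃^{±1}] be the ring of Laurent polynomials in three variables with integer coefficients, let M = Λ₃³ be the free Λ₃-module with basis a₁, a₂, a₃, and let φ : M → Λ₃ be the Λ₃-linear map with φ(aᵢ) = tᵢ − 1 for i = 1, 2, 3. With the operation x ▷ y = (φ(y) + 1)·x − φ(x)·y, one has a₁ ▷ (a₂ ▷ a₃) ≠ (a₁ ▷ a₂) ▷ (a₁ ▷ a₃); in particular, the operation ▷ is not left self-distributive on M. -/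
/-- `Λ₃ = ℤ[t₁^{±1}, t₂^{±1}, t₃^{±1}]`, the ring of Laurent polynomials in three
variables with integer coefficients, realized as the additive monoid algebra of `ℤ`
over the group `Fin 3 →₀ ℤ`. -/
abbrev Lambda3 : Type := AddMonoidAlgebra ℤ (Fin 3 →₀ ℤ)

/-- The variable `tᵢ` of `Λ₃`, the monomial corresponding to the `i`-th standard generator. -/
noncomputable def tvar (i : Fin 3) : Lambda3 :=
  AddMonoidAlgebra.single (Finsupp.single i 1) 1

theorem tvar_injective : Function.Injective tvar := fun _ _ h =>
  Finsupp.single_left_injective one_ne_zero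
    (AddMonoidAlgebra.of_injective (R := ℤ) (M := Fin 3 →₀ ℤ) h)

theorem tvar_ne_one (i : Fin 3) : tvar i ≠ 1 := fun h =>
  Finsupp.single_ne_zero.mpr one_ne_zero
    (AddMonoidAlgebra.of_injective (R := ℤ) (M := Fin 3 →₀ ℤ) h)

/-- In the free module `Λ₃³` with basis `a₁, a₂, a₃` and `φ` the `Λ₃`-linear map with
`φ(aᵢ) = tᵢ - 1`, the operation `x ▷ y = (φ(y) + 1) • x - φ(x) • y` satisfies
`a₁ ▷ (a₂ ▷ a₃) ≠ (a₁ ▷ a₂) ▷ (a₁ ▷ a₃)`; in particular `▷` is not left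
self-distributive. -/
theorem tri_not_left_distrib
    (φ : (Fin 3 → Lambda3) →ₗ[Lambda3] Lambda3)
    (a₁ a₂ a₃ : Fin 3 → Lambda3)
    (ha₁ : a₁ = Pi.single 0 1) (ha₂ : a₂ = Pi.single 1 1) (ha₃ : a₃ = Pi.single 2 1)
    (h₁ : φ a₁ = tvar 0 - 1) (h₂ : φ a₂ = tvar 1 - 1) (h₃ : φ a₃ = tvar 2 - 1) :
    tri φ a₁ (tri φ a₂ a₃) ≠ tri φ (tri φ a₁ a₂) (tri φ a₁ a₃) := by
  intro h
  have hcoord := congrFun h 1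
  simp only [tri, map_sub, map_smul, h₁, h₂, h₃, Pi.sub_apply, Pi.smul_apply,
    smul_eq_mul] at hcoord
  have e₁ : a₁ 1 = 0 := by simp [ha₁]
  have e₂ : a₂ 1 = 1 := by simp [ha₂]
  have e₃ : a₃ 1 = 0 := by simp [ha₃]
  rw [e₁, e₂, e₃] at hcoord
  have hprod : (tvar 0 - 1) * (tvar 2 - tvar 0) = 0 := by
    linear_combination -hcoord
  rcases mul_eq_zero.mp hprod with h0 | h0
  · exact tvar_ne_one 0 (sub_eq_zero.mp h0)
  · exact absurd (tvar_injective (sub_eq_zero.mp h0)) (by decide)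
end
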